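/- arXiv:2009.09532 — 5 statements merged into one kernel-verified Lean document; each statement's English description precedes it below -/
import Mathlib

section
/- Let r, q : ℝ × ℝ → ℂ be functions with r(·,·) jointly continuous, ∂_t r existing and jointly continuous, and q(·,t) and ∂_x q(·,t) continuous in x for each t, satisfying ∂_t r(x,t) + ∂_x q(x,t) = 0 for all x ≥ 0 and all t. Let k ∈ ℂ with Im k ≤ 0. Fix t₀ ∈ ℝ and assume: x ↦ r(x,t) and x ↦ q(x,t) are integrable on (0,∞) for t near t₀; q(x,t₀) → 0 as x → ∞; ∂_x q(·,t₀) is integrable on (0,∞); and there exist δ > 0 and an integrable function g on (0,∞) with |∂_t r(x,t)| ≤ g(x) for all x > 0 and |t − t₀| < δ. Then the function t ↦ ∫₀^∞ e^{-ikx} r(x,t) dx is differentiable at t₀ with derivative equal to −ik ∫₀^∞ e^{-ikx} q(x,t₀) dx + q(0,t₀). -/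
open Complex MeasureTheory Filter Set

/-!
For `Im k ≤ 0` the kernel `e^{-ikx}` is bounded by `1` on `x > 0`. Hence `g` dominates
`e^{-ikx} r_t`, and one may differentiate under the integral sign at `t₀`
(`hasDerivAt_integral_of_dominated_loc_of_deriv_le`), which gives `∫ e^{-ikx} r_t(x, t₀) dx`.
Substituting `r_t = -q_x` and integrating by parts gives the claimed formula: the boundary term at
infinity vanishes since `q(x, t₀) → 0` and the kernel is bounded, and the one at `0` is `q(0, t₀)`.
-/

lemma norm_fourierKernel_le_one {k : ℂ} (hk : k.im ≤ 0) {x : ℝ} (hx : 0 ≤ x) :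
    ‖Complex.exp (-(Complex.I * k * x))‖ ≤ 1 := by
  rw [Complex.norm_exp, Real.exp_le_one_iff]
  have : (-(Complex.I * k * x)).re = k.im * x := by simp
  rw [this]
  exact mul_nonpos_of_nonpos_of_nonneg hk hx

lemma continuous_fourierKernel (k : ℂ) :
    Continuous fun x : ℝ => Complex.exp (-(Complex.I * k * x)) := by
  fun_prop

lemma integrableOn_fourierKernel_mul {k : ℂ} (hk : k.im ≤ 0) {f : ℝ → ℂ}
    (hf : IntegrableOn f (Ioi (0:ℝ))) :
    IntegrableOn (fun x : ℝ => Complex.exp (-(Complex.I * k * x)) * f x) (Ioi (0:ℝ)) := by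
  refine Integrable.bdd_mul (c := 1) hf (continuous_fourierKernel k).aestronglyMeasurable ?_
  exact (ae_restrict_iff' measurableSet_Ioi).2
    (.of_forall fun x hx => norm_fourierKernel_le_one hk (le_of_lt hx))

/-- Integration by parts for the half-line Fourier transform of a derivative. -/
lemma integral_fourierKernel_mul_deriv {k : ℂ} (hk : k.im ≤ 0) {u u' : ℝ → ℂ}
    (hu : ∀ x, HasDerivAt u (u' x) x) (hu_int : IntegrableOn u (Ioi (0:ℝ)))
    (hu'_int : IntegrableOn u' (Ioi (0:ℝ))) (hu_lim : Tendsto u atTop (nhds 0)) :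
    ∫ x in Ioi (0:ℝ), Complex.exp (-(Complex.I * k * x)) * u' x =
      Complex.I * k * (∫ x in Ioi (0:ℝ), Complex.exp (-(Complex.I * k * x)) * u x) - u 0 := by
  have hE : ∀ x : ℝ, HasDerivAt (fun x : ℝ => Complex.exp (-(Complex.I * k * x)))
      (Complex.exp (-(Complex.I * k * x)) * (-(Complex.I * k))) x := by
    intro x
    have h := ((Complex.ofRealCLM.hasDerivAt (x := x)).const_mul (Complex.I * k)).neg.cexp
    simpa using h
  have hi := (integrableOn_fourierKernel_mul hk hu_int).const_mul (-(Complex.I * k))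
  have hi' := integrableOn_fourierKernel_mul hk hu'_int
  have hlim : Tendsto (fun x : ℝ => Complex.exp (-(Complex.I * k * x)) * u x) atTop (nhds 0) := by
    refine squeeze_zero_norm' ?_ (tendsto_zero_iff_norm_tendsto_zero.1 hu_lim)
    filter_upwards [eventually_ge_atTop 0] with x hx
    rw [norm_mul]
    exact mul_le_of_le_one_left (norm_nonneg _) (norm_fourierKernel_le_one hk hx)
  have key := integral_Ioi_of_hasDerivAt_of_tendsto' (a := 0)
    (f := fun x : ℝ => Complex.exp (-(Complex.I * k * x)) * u x)
    (f' := fun x : ℝ => -(Complex.I * k) * (Complex.exp (-(Complex.I * k * x)) * u x)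
      + Complex.exp (-(Complex.I * k * x)) * u' x)
    (fun x _ => ((hE x).mul (hu x)).congr_deriv (by ring)) (hi.add hi') hlim
  rw [integral_add hi hi', integral_const_mul] at key
  simp only [Complex.ofReal_zero, mul_zero, neg_zero, Complex.exp_zero, one_mul] at key
  linear_combination key

/-- Differentiation under the integral sign for the half-line Fourier
transform of `r`, using `r_t + q_x = 0`: the first component of the global relation. -/
theorem stmt3 (r q rt qx : ℝ × ℝ → ℂ) (k : ℂ) (hk : k.im ≤ 0)
    (hr_cont : Continuous r)
    (hrt : ∀ p : ℝ × ℝ, HasDerivAt (fun t => r (p.1, t)) (rt p) p.2)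
    (hrt_cont : Continuous rt)
    (hq_cont : ∀ t : ℝ, Continuous fun x => q (x, t))
    (hqx : ∀ p : ℝ × ℝ, HasDerivAt (fun x => q (x, p.2)) (qx p) p.1)
    (hqx_cont : ∀ t : ℝ, Continuous fun x => qx (x, t))
    (hpde : ∀ x t : ℝ, 0 ≤ x → rt (x, t) + qx (x, t) = 0)
    (t₀ : ℝ)
    (hr_int : ∀ᶠ t in nhds t₀, IntegrableOn (fun x => r (x, t)) (Ioi (0:ℝ)))
    (hq_int : ∀ᶠ t in nhds t₀, IntegrableOn (fun x => q (x, t)) (Ioi (0:ℝ)))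
    (hq_decay : Tendsto (fun x => q (x, t₀)) atTop (nhds 0))
    (hqx_int : IntegrableOn (fun x => qx (x, t₀)) (Ioi (0:ℝ)))
    (hdom : ∃ δ > (0:ℝ), ∃ g : ℝ → ℝ, IntegrableOn g (Ioi (0:ℝ)) ∧
      ∀ x t : ℝ, 0 < x → |t - t₀| < δ → ‖rt (x, t)‖ ≤ g x) :
    HasDerivAt (fun t => ∫ x in Ioi (0:ℝ), Complex.exp (-(Complex.I * k * x)) * r (x, t))
      (-(Complex.I * k) * (∫ x in Ioi (0:ℝ), Complex.exp (-(Complex.I * k * x)) * q (x, t₀))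
        + q (0, t₀)) t₀ := by
  obtain ⟨δ, hδ, g, hg, hbound⟩ := hdom
  have hD := (hasDerivAt_integral_of_dominated_loc_of_deriv_le
    (μ := volume.restrict (Ioi (0:ℝ))) (x₀ := t₀) (s := Metric.ball t₀ δ) (bound := g)
    (F := fun t (x : ℝ) => Complex.exp (-(Complex.I * k * x)) * r (x, t))
    (F' := fun t (x : ℝ) => Complex.exp (-(Complex.I * k * x)) * rt (x, t))
    (Metric.ball_mem_nhds t₀ hδ)
    (.of_forall fun t => Continuous.aestronglyMeasurable (by fun_prop))
    (integrableOn_fourierKernel_mul hk hr_int.self_of_nhds)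
    (Continuous.aestronglyMeasurable (by fun_prop))
    ((ae_restrict_iff' measurableSet_Ioi).2 (.of_forall fun x hx t ht => by
      rw [norm_mul]
      refine (mul_le_of_le_one_left (norm_nonneg _)
        (norm_fourierKernel_le_one hk (le_of_lt hx))).trans (hbound x t hx ?_)
      simpa [Real.dist_eq] using ht))
    hg
    (.of_forall fun x t _ => (hrt (x, t)).const_mul _)).2
  refine hD.congr_deriv ?_
  have hrt_eq : ∫ x in Ioi (0:ℝ), Complex.exp (-(Complex.I * k * x)) * rt (x, t₀) =
      -∫ x in Ioi (0:ℝ), Complex.exp (-(Complex.I * k * x)) * qx (x, t₀) := by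
    rw [← integral_neg]
    refine setIntegral_congr_fun measurableSet_Ioi fun x hx => ?_
    simp only [eq_neg_of_add_eq_zero_left (hpde x t₀ (le_of_lt hx)), mul_neg]
  rw [hrt_eq, integral_fourierKernel_mul_deriv hk (u := fun x => q (x, t₀))
    (fun x => hqx (x, t₀)) hq_int.self_of_nhds hqx_int hq_decay]
  ring
end

section
/- For every integer j ≥ 1 and every real r with 0 < r < 2, the circle integral ∮_{C(i,r)} k^{2j−1}/(1+k²)^j dk = iπ, where ∮_{C(i,r)} g(k) dk denotes ∫₀^{2π} g(i + r e^{iθ}) · i r e^{iθ} dθ, the integral over the positively oriented circle of radius r centered at i. -/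
open Complex Real

/-!
The integral does not depend on `j`: since
`d/dk [k^{2j}/(1+k²)^j] = 2j (k^{2j-1}/(1+k²)^j - k^{2j+1}/(1+k²)^{j+1})`,
the integrands for `j` and `j + 1` differ by an exact derivative on `ℂ ∖ {i, -i}`, whose integral
over the closed circle vanishes. This replaces the computation of the residue at the pole of
order `j`. For `j = 1` the partial fractions `k/(1+k²) = (1/(k-i) + 1/(k+i))/2` give `iπ`: the first
term contributes `2πi/2`, and the second is holomorphic on the disc because `r < 2`.
-/

/-- The disc of radius `r < 2` about `i` does not contain `-i`. -/
lemma add_I_ne_zero_of_mem_closedBall {r : ℝ} (hr2 : r < 2) {z : ℂ}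
    (hz : z ∈ Metric.closedBall Complex.I r) : z + Complex.I ≠ 0 := by
  intro h
  have hz' : ‖z - Complex.I‖ ≤ r := by simpa [dist_eq_norm] using hz
  rw [eq_neg_of_add_eq_zero_left h, show -Complex.I - Complex.I = -(2 * Complex.I) by ring,
    norm_neg] at hz'
  norm_num at hz'
  linarith

lemma sub_I_ne_zero_of_mem_sphere {r : ℝ} (hr0 : 0 < r) {z : ℂ}
    (hz : z ∈ Metric.sphere Complex.I r) : z - Complex.I ≠ 0 :=
  sub_ne_zero.mpr (Metric.ne_of_mem_sphere hz hr0.ne')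

lemma one_add_sq_eq_mul (z : ℂ) : 1 + z ^ 2 = (z - Complex.I) * (z + Complex.I) := by
  linear_combination Complex.I_sq

lemma one_add_sq_ne_zero_of_mem_sphere {r : ℝ} (hr0 : 0 < r) (hr2 : r < 2) {z : ℂ}
    (hz : z ∈ Metric.sphere Complex.I r) : 1 + z ^ 2 ≠ 0 := by
  rw [one_add_sq_eq_mul]
  exact mul_ne_zero (sub_I_ne_zero_of_mem_sphere hr0 hz)
    (add_I_ne_zero_of_mem_closedBall hr2 (Metric.sphere_subset_closedBall hz))

lemma circleIntegrable_pow_div_one_add_sq_pow {r : ℝ} (hr0 : 0 < r) (hr2 : r < 2) (a b : ℕ) :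
    CircleIntegrable (fun k : ℂ => k ^ a / (1 + k ^ 2) ^ b) Complex.I r := by
  refine ContinuousOn.circleIntegrable hr0.le (ContinuousOn.div (by fun_prop) (by fun_prop) ?_)
  exact fun z hz => pow_ne_zero _ (one_add_sq_ne_zero_of_mem_sphere hr0 hr2 hz)

lemma circleIntegral_div_one_add_sq {r : ℝ} (hr0 : 0 < r) (hr2 : r < 2) :
    (∮ k in C(Complex.I, r), k / (1 + k ^ 2)) = Complex.I * (Real.pi : ℂ) := by
  have hd : DifferentiableOn ℂ (fun k : ℂ => (k + Complex.I)⁻¹) (Metric.closedBall Complex.I r) :=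
    DifferentiableOn.inv (by fun_prop) fun z hz => add_I_ne_zero_of_mem_closedBall hr2 hz
  have h0 : (∮ k in C(Complex.I, r), (k + Complex.I)⁻¹) = 0 :=
    (hd.mono Metric.closure_ball_subset_closedBall).diffContOnCl.circleIntegral_eq_zero hr0.le
  have h1 : CircleIntegrable (fun k : ℂ => (k - Complex.I)⁻¹) Complex.I r := by
    refine ContinuousOn.circleIntegrable hr0.le (ContinuousOn.inv₀ (by fun_prop) ?_)
    exact fun z hz => sub_I_ne_zero_of_mem_sphere hr0 hz
  have h2 : CircleIntegrable (fun k : ℂ => (k + Complex.I)⁻¹) Complex.I r :=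
    (hd.continuousOn.mono Metric.sphere_subset_closedBall).circleIntegrable hr0.le
  have h3 : (∮ k in C(Complex.I, r), k / (1 + k ^ 2)) =
      ∮ k in C(Complex.I, r), (1 / 2 : ℂ) * ((k - Complex.I)⁻¹ + (k + Complex.I)⁻¹) := by
    refine circleIntegral.integral_congr hr0.le fun z hz => ?_
    have ha := sub_I_ne_zero_of_mem_sphere hr0 hz
    have hb := add_I_ne_zero_of_mem_closedBall hr2 (Metric.sphere_subset_closedBall hz)
    simp only [one_add_sq_eq_mul]
    field_simp
    ring
  rw [h3, circleIntegral.integral_const_mul, circleIntegral.integral_add h1 h2, h0,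
    circleIntegral.integral_sub_center_inv _ hr0.ne']
  ring

lemma hasDerivAt_pow_div_one_add_sq_pow (m : ℕ) {z : ℂ} (hz : 1 + z ^ 2 ≠ 0) :
    HasDerivAt (fun k : ℂ => k ^ (2 * m + 2) / (1 + k ^ 2) ^ (m + 1) / (2 * m + 2))
      (z ^ (2 * m + 1) / (1 + z ^ 2) ^ (m + 1) - z ^ (2 * m + 3) / (1 + z ^ 2) ^ (m + 2)) z := by
  have hm : (2 * m + 2 : ℂ) ≠ 0 := by exact_mod_cast (by omega : 2 * m + 2 ≠ 0)
  have hq : HasDerivAt (fun k : ℂ => (1 + k ^ 2) ^ (m + 1)) _ z :=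
    ((hasDerivAt_pow 2 z).const_add 1).fun_pow (m + 1)
  have h := ((hasDerivAt_pow (2 * m + 2) z).fun_div hq (pow_ne_zero _ hz)).div_const
    (2 * m + 2 : ℂ)
  refine h.congr_deriv ?_
  rw [show 2 * m + 2 - 1 = 2 * m + 1 by omega, Nat.add_sub_cancel]
  push_cast
  field_simp
  ring

lemma circleIntegral_pow_div_succ {r : ℝ} (hr0 : 0 < r) (hr2 : r < 2) (m : ℕ) :
    (∮ k in C(Complex.I, r), k ^ (2 * m + 1) / (1 + k ^ 2) ^ (m + 1)) =
      ∮ k in C(Complex.I, r), k ^ (2 * m + 3) / (1 + k ^ 2) ^ (m + 2) := by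
  rw [← sub_eq_zero, ← circleIntegral.integral_sub
    (circleIntegrable_pow_div_one_add_sq_pow hr0 hr2 _ _)
    (circleIntegrable_pow_div_one_add_sq_pow hr0 hr2 _ _)]
  exact circleIntegral.integral_eq_zero_of_hasDerivWithinAt hr0.le fun z hz =>
    (hasDerivAt_pow_div_one_add_sq_pow m
      (one_add_sq_ne_zero_of_mem_sphere hr0 hr2 hz)).hasDerivWithinAt

/-- For `j ≥ 1` and `0 < r < 2`,
`∮_{C(i,r)} k^{2j-1}/(1+k²)^j dk = iπ`. -/
theorem stmt9 (j : ℕ) (hj : 1 ≤ j) (r : ℝ) (hr0 : 0 < r) (hr2 : r < 2) :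
    (∮ k in C(Complex.I, r), k ^ (2 * j - 1) / (1 + k ^ 2) ^ j) =
      Complex.I * (Real.pi : ℂ) := by
  obtain ⟨m, rfl⟩ := Nat.exists_eq_add_of_le' hj
  rw [show 2 * (m + 1) - 1 = 2 * m + 1 by omega]
  clear hj
  induction m with
  | zero => simpa using circleIntegral_div_one_add_sq hr0 hr2
  | succ m ih => rw [← ih, circleIntegral_pow_div_succ hr0 hr2 m]; rfl
end

section
/- For every integer j ≥ 0 and every real r with 0 < r < 2, the circle integral ∮_{C(i,r)} k^{2j+1}/(1+k²)^{j+1} dk = iπ, where ∮_{C(i,r)} g(k) dk denotes ∫₀^{2π} g(i + r e^{iθ}) · i r e^{iθ} dθ, the integral over the positively oriented circle of radius r centered at i. -/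
/-!
Write `f j` for the integrand and `u = k² / (1 + k²)`. Since `1 - u = 1 / (1 + k²)` and
`u' = 2k / (1 + k²)²`, the difference `f j - f (j + 1) = k^{2j+1} / (1 + k²)^{j+2}` is the derivative
of `u^{j+1} / (2 (j + 1))`. The circle avoids the poles `±i`, so this difference integrates to zero
and the integral does not depend on `j`. For `j = 0`, Cauchy's formula applied to
`k ↦ k / (k + i)` at the centre `i` gives `2πi · (1/2)`.
-/

open Complex Real

lemma add_I_ne_zero_of_mem {r : ℝ} (hr2 : r < 2) {k : ℂ}
    (hk : k ∈ Metric.closedBall Complex.I r) : k + Complex.I ≠ 0 := by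
  intro h
  have hkI : k = -Complex.I := eq_neg_of_add_eq_zero_left h
  rw [hkI, Metric.mem_closedBall, Complex.dist_eq,
    show -Complex.I - Complex.I = -(2 * Complex.I) by ring] at hk
  simp at hk
  linarith

lemma one_add_sq_ne_zero_of_mem {r : ℝ} (hr0 : 0 < r) (hr2 : r < 2) {k : ℂ}
    (hk : k ∈ Metric.sphere Complex.I r) : 1 + k ^ 2 ≠ 0 := by
  have h1 := add_I_ne_zero_of_mem hr2 (Metric.sphere_subset_closedBall hk)
  have h2 : k - Complex.I ≠ 0 := by
    rw [← norm_ne_zero_iff, mem_sphere_iff_norm.1 hk]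
    exact hr0.ne'
  have h3 : 1 + k ^ 2 = (k - Complex.I) * (k + Complex.I) := by
    linear_combination Complex.I_sq
  rw [h3]
  exact mul_ne_zero h2 h1

lemma circleIntegrable_integrand (j : ℕ) {r : ℝ} (hr0 : 0 < r) (hr2 : r < 2) :
    CircleIntegrable (fun k : ℂ => k ^ (2 * j + 1) / (1 + k ^ 2) ^ (j + 1)) Complex.I r := by
  refine ContinuousOn.circleIntegrable hr0.le (ContinuousOn.div (by fun_prop) (by fun_prop) ?_)
  exact fun k hk => pow_ne_zero _ (one_add_sq_ne_zero_of_mem hr0 hr2 hk)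

lemma hasDerivAt_primitive (j : ℕ) {k : ℂ} (h : 1 + k ^ 2 ≠ 0) :
    HasDerivAt (fun z : ℂ => (z ^ 2 / (1 + z ^ 2)) ^ (j + 1) / (2 * ((j : ℂ) + 1)))
      (k ^ (2 * j + 1) / (1 + k ^ 2) ^ (j + 1) -
        k ^ (2 * (j + 1) + 1) / (1 + k ^ 2) ^ (j + 1 + 1)) k := by
  have hj : (j : ℂ) + 1 ≠ 0 := Nat.cast_add_one_ne_zero j
  have hsq := hasDerivAt_pow 2 k
  have hd := (((hsq.div (hsq.const_add 1) h).pow (j + 1)).div_const (2 * ((j : ℂ) + 1)))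
  refine hd.congr_deriv ?_
  simp only [Pi.div_apply, Nat.add_sub_cancel, div_pow, ← pow_mul]
  push_cast
  field_simp
  ring

lemma circleIntegral_base {r : ℝ} (hr0 : 0 < r) (hr2 : r < 2) :
    (∮ k in C(Complex.I, r), k ^ (2 * 0 + 1) / (1 + k ^ 2) ^ (0 + 1)) =
      Complex.I * (Real.pi : ℂ) := by
  have hdiff : DifferentiableOn ℂ (fun k : ℂ => k / (k + Complex.I))
      (Metric.closedBall Complex.I r) :=
    DifferentiableOn.div (by fun_prop) (by fun_prop) fun k hk => add_I_ne_zero_of_mem hr2 hk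
  have hc := hdiff.circleIntegral_sub_inv_smul (Metric.mem_ball_self hr0)
  have hcongr : (∮ k in C(Complex.I, r), k ^ (2 * 0 + 1) / (1 + k ^ 2) ^ (0 + 1)) =
      ∮ k in C(Complex.I, r), (k - Complex.I)⁻¹ • (k / (k + Complex.I)) := by
    refine circleIntegral.integral_congr hr0.le fun k _ => ?_
    have h3 : 1 + k ^ 2 = (k - Complex.I) * (k + Complex.I) := by
      linear_combination Complex.I_sq
    simp only [h3, smul_eq_mul, mul_zero, zero_add, pow_one, div_eq_mul_inv, mul_inv]
    ring
  rw [hcongr, hc, smul_eq_mul]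
  have hI := Complex.I_ne_zero
  field_simp
  ring

/-- For `j ≥ 0` and `0 < r < 2`,
`∮_{C(i,r)} k^{2j+1}/(1+k²)^{j+1} dk = iπ`. -/
theorem stmt10 (j : ℕ) (r : ℝ) (hr0 : 0 < r) (hr2 : r < 2) :
    (∮ k in C(Complex.I, r), k ^ (2 * j + 1) / (1 + k ^ 2) ^ (j + 1)) =
      Complex.I * (Real.pi : ℂ) := by
  induction j with
  | zero => exact circleIntegral_base hr0 hr2
  | succ j ih =>
    rw [← ih, eq_comm, ← sub_eq_zero,
      ← circleIntegral.integral_sub (circleIntegrable_integrand j hr0 hr2)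
        (circleIntegrable_integrand (j + 1) hr0 hr2)]
    exact circleIntegral.integral_eq_zero_of_hasDerivWithinAt hr0.le fun k hk =>
      (hasDerivAt_primitive j (one_add_sq_ne_zero_of_mem hr0 hr2 hk)).hasDerivWithinAt
end

section
/- Define μ : ℂ → ℂ by μ(k) = k · (1 + k^{-2})^{1/2}, where z^{1/2} denotes the principal complex power (with branch cut along the negative real axis), and let B = { i y : y ∈ ℝ, |y| ≤ 1 } be the vertical segment from −i to i. Then: (i) μ is complex-differentiable at every point of ℂ ∖ B; (ii) μ(k)² = 1 + k² for every k ∈ ℂ ∖ B; (iii) μ(−k) = −μ(k) for every k ∈ ℂ; and consequently (iv) the function ω(k) := k / μ(k) satisfies ω(−k) = ω(k) for every k ∈ ℂ ∖ B. -/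
open Complex Set

/-!
Off the segment `B = i[-1,1]` the point `1 + k⁻²` avoids `(-∞, 0]`: if `1 + k⁻² = r ≤ 0`, then
`k² = -s` with `s = (1 - r)⁻¹ ∈ (0, 1]`, so `k = ±i√s ∈ B` (`one_add_inv_sq_mem_slitPlane`).
Hence the principal square root is holomorphic at `1 + k⁻²`, which gives differentiability;
squaring gives `μ(k)² = k² (1 + k⁻²) = 1 + k²`. Oddness of `μ` and evenness of `ω` hold because
`1 + k⁻²` depends only on `k²`.
-/

theorem one_add_inv_sq_mem_slitPlane {k : ℂ}
    (hk : ¬ ∃ y : ℝ, |y| ≤ 1 ∧ k = Complex.I * y) :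
    1 + (k ^ 2)⁻¹ ∈ Complex.slitPlane := by
  contrapose! hk
  rw [Complex.mem_slitPlane_iff, not_or, not_lt, not_not] at hk
  obtain ⟨hre, him⟩ := hk
  set r : ℝ := (1 + (k ^ 2)⁻¹).re with hr
  have h1 : 1 + (k ^ 2)⁻¹ = (r : ℂ) := Complex.ext (by rw [Complex.ofReal_re]) (by rw [him]; simp)
  have hs0 : 0 ≤ (1 - r)⁻¹ := inv_nonneg.mpr (by linarith)
  have hs1 : (1 - r)⁻¹ ≤ 1 := inv_le_one_of_one_le₀ (by linarith)
  have hy : |√((1 - r)⁻¹)| ≤ 1 := by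
    rw [abs_of_nonneg (Real.sqrt_nonneg _)]
    exact Real.sqrt_le_one.mpr hs1
  have hsq : ((√((1 - r)⁻¹) : ℝ) : ℂ) ^ 2 = ((1 - r)⁻¹ : ℝ) := by
    rw [← Complex.ofReal_pow, Real.sq_sqrt hs0]
  have hk2 : k ^ 2 = (Complex.I * (√((1 - r)⁻¹) : ℝ)) ^ 2 := by
    rw [mul_pow, Complex.I_sq, hsq, ← inv_inv (k ^ 2), eq_sub_of_add_eq' h1]
    push_cast
    rw [neg_one_mul, ← inv_neg, neg_sub]
  rcases sq_eq_sq_iff_eq_or_eq_neg.mp hk2 with h | h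
  · exact ⟨_, hy, h⟩
  · exact ⟨-√((1 - r)⁻¹), by rwa [abs_neg], by rw [h]; push_cast; ring⟩

/-- The branch `μ(k) = k (1 + k⁻²)^{1/2}` (principal complex power) of
`(1+k²)^{1/2}` with branch cut along the segment `B = i[-1,1]`: it is holomorphic off
`B`, squares to `1 + k²` off `B`, is odd on all of `ℂ`, and `ω(k) = k/μ(k)` is even
off `B`. -/
theorem stmt16 (μ ω : ℂ → ℂ) (B : Set ℂ)
    (hμ : ∀ k : ℂ, μ k = k * (1 + (k ^ 2)⁻¹) ^ ((1 : ℂ) / 2))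
    (hω : ∀ k : ℂ, ω k = k / μ k)
    (hB : B = {z : ℂ | ∃ y : ℝ, |y| ≤ 1 ∧ z = Complex.I * y}) :
    (∀ k : ℂ, k ∉ B → DifferentiableAt ℂ μ k) ∧
    (∀ k : ℂ, k ∉ B → μ k ^ 2 = 1 + k ^ 2) ∧
    (∀ k : ℂ, μ (-k) = -μ k) ∧
    (∀ k : ℂ, k ∉ B → ω (-k) = ω k) := by
  subst hB
  have hodd : ∀ k : ℂ, μ (-k) = -μ k := fun k => by rw [hμ, hμ, neg_sq, neg_mul]
  -- The origin lies in `B`, so the junk value of `(k ^ 2)⁻¹` there never matters off `B`.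
  have hne : ∀ k : ℂ, k ∉ {z : ℂ | ∃ y : ℝ, |y| ≤ 1 ∧ z = Complex.I * y} → k ≠ 0 := by
    rintro k hk rfl
    exact hk ⟨0, by simp, by simp⟩
  refine ⟨fun k hk => ?_, fun k hk => ?_, hodd, fun k _ => ?_⟩
  · have hk2 : k ^ 2 ≠ 0 := pow_ne_zero 2 (hne k hk)
    rw [funext hμ]
    have hd : DifferentiableAt ℂ (fun z : ℂ => 1 + (z ^ 2)⁻¹) k :=
      ((differentiableAt_id.pow 2).inv hk2).const_add 1
    exact differentiableAt_id.mul
      (hd.cpow (differentiableAt_const _) (one_add_inv_sq_mem_slitPlane hk))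
  · have hk2 : k ^ 2 ≠ 0 := pow_ne_zero 2 (hne k hk)
    have hroot : ((1 + (k ^ 2)⁻¹) ^ ((1 : ℂ) / 2)) ^ 2 = 1 + (k ^ 2)⁻¹ := by
      rw [← Complex.cpow_nat_mul]
      norm_num
    rw [hμ, mul_pow, hroot, mul_add, mul_inv_cancel₀ hk2]
    ring
  · rw [hω, hω, hodd, neg_div_neg_eq]
end

section
/- Let f : ℝ → ℂ be continuously differentiable on [0,∞) with f and f' integrable on (0,∞) and f(x) → 0 as x → ∞. Define F(k) := ∫₀^∞ e^{iky} f(y) dy for Im k ≥ 0, and define S(k,t) := ∑_{j=0}^∞ (−1)^j t^{2j+1} k^{2j+1} / ((2j+1)! (1+k²)^{j+1}) for k ∈ ℂ ∖ {i, −i} and t ∈ ℝ. Then for every t ∈ ℝ and every real r with 0 < r < 1, the function k ↦ S(k,t) F(k) is integrable on ℝ and ∮_{C(i,r)} S(k,t) F(k) dk = ∫_{−∞}^{∞} S(k,t) F(k) dk, where ∮_{C(i,r)} g(k) dk denotes ∫₀^{2π} g(i + r e^{iθ}) · i r e^{iθ} dθ, the integral over the positively oriented circle of radius r centered at i. -/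
open Complex MeasureTheory Set Filter

/-!
The integrand `g(k) = S(k,t) F(k)` is holomorphic in the upper half-plane except at `k = i`,
continuous up to the real line, and `O(1/|k|²)` at infinity; the theorem is Cauchy's theorem for
the region between `C(i, r)` and the real line.

The properties of `g` come from two sources. Summing the series gives
`S(k,t) = t k/(1+k²) · E(t²k²/(1+k²))` with `E(z²) = sin z / z` entire (`series_eq`), and
`k²/(1+k²)` is bounded away from `i`. Integrating by parts in `F` gives `|k| |F(k)| ≤ const`
(`norm_halfLineTransform_le`), where integrability of `f'` and the vanishing limit of `f` are used.
Together they yield `norm_series_mul_le`.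

For the deformation, the Cayley map `w ↦ i(1+w)/(1-w)` carries the unit disc to the upper
half-plane and the decay of `g` becomes boundedness of the pulled-back integrand near the unit
circle. In the `w`-plane the contours are concentric circles, so Cauchy's theorem on an annulus
and dominated convergence identify the integral over a small circle with the one over the unit
circle (`circleIntegral_cayleyPullback_eq`), that is, over the real line
(`circleIntegral_cayleyPullback_one`). The image of a small circle `|w| = r/2` under the Cayley map
is not centred at `i`; the family `φ_s(w) = i + 2iw/(1-sw)` joins it to `C(i, r)`, and the integral
is constant along the family since `∂_s [g(φ_s) φ_s'] = ∂_w [g(φ_s) ∂_s φ_s]`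
(`circleIntegral_mob_one_eq_mob_zero`).
-/

/-! ### The half-line Fourier transform -/

theorem norm_exp_I_mul_le {k : ℂ} (hk : 0 ≤ k.im) {y : ℝ} (hy : 0 ≤ y) :
    ‖Complex.exp (I * k * y)‖ ≤ 1 := by
  rw [Complex.norm_exp, Real.exp_le_one_iff]
  have : (I * k * y).re = -(k.im * y) := by simp
  rw [this]
  nlinarith [mul_nonneg hk hy]

theorem aesm_exp_mul {f : ℝ → ℂ} (hf : IntegrableOn f (Ioi 0)) (k : ℂ) :
    AEStronglyMeasurable (fun y : ℝ => Complex.exp (I * k * y) * f y)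
      (volume.restrict (Ioi 0)) :=
  (Continuous.aestronglyMeasurable (by fun_prop)).mul hf.aestronglyMeasurable

theorem norm_exp_mul_le {f : ℝ → ℂ} {k : ℂ} (hk : 0 ≤ k.im) {y : ℝ} (hy : 0 ≤ y) :
    ‖Complex.exp (I * k * y) * f y‖ ≤ ‖f y‖ := by
  rw [norm_mul]
  exact mul_le_of_le_one_left (norm_nonneg _) (norm_exp_I_mul_le hk hy)

theorem integrable_exp_mul {f : ℝ → ℂ} (hf : IntegrableOn f (Ioi 0)) {k : ℂ} (hk : 0 ≤ k.im) :
    IntegrableOn (fun y : ℝ => Complex.exp (I * k * y) * f y) (Ioi 0) := by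
  refine Integrable.mono' hf.norm (aesm_exp_mul hf k) ?_
  filter_upwards [ae_restrict_mem measurableSet_Ioi] with y hy
  exact norm_exp_mul_le hk (le_of_lt hy)

theorem continuousOn_halfLineTransform {f : ℝ → ℂ} (hf : IntegrableOn f (Ioi 0)) :
    ContinuousOn (fun k : ℂ => ∫ y in Ioi (0:ℝ), Complex.exp (I * k * y) * f y)
      {k | 0 ≤ k.im} := by
  refine continuousOn_of_dominated (bound := fun y => ‖f y‖)
    (fun k _ => aesm_exp_mul hf k) (fun k hk => ?_) hf.norm (ae_of_all _ fun y => ?_)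
  · filter_upwards [ae_restrict_mem measurableSet_Ioi] with y hy
    exact norm_exp_mul_le hk (le_of_lt hy)
  · exact Continuous.continuousOn (by fun_prop)

/-- Holomorphy of the half-line transform: on `Im k > ε` the `k`-derivative of the integrand is
dominated by `‖f‖ / ε`, because `y e^{-ε y} ≤ 1 / ε`. -/
theorem differentiableOn_halfLineTransform {f : ℝ → ℂ} (hf : IntegrableOn f (Ioi 0)) :
    DifferentiableOn ℂ (fun k : ℂ => ∫ y in Ioi (0:ℝ), Complex.exp (I * k * y) * f y)
      {k | 0 < k.im} := by
  intro k₀ hk₀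
  have hk₀' : 0 < k₀.im := hk₀
  set ε := k₀.im / 2 with hε
  have hε0 : 0 < ε := by positivity
  refine DifferentiableAt.differentiableWithinAt ?_
  have key := hasDerivAt_integral_of_dominated_loc_of_deriv_le
    (μ := volume.restrict (Ioi (0:ℝ)))
    (F := fun (k : ℂ) (y : ℝ) => Complex.exp (I * k * y) * f y)
    (F' := fun (k : ℂ) (y : ℝ) => (I * y) * (Complex.exp (I * k * y) * f y))
    (bound := fun y => ‖f y‖ / ε) (x₀ := k₀) (s := {k : ℂ | ε < k.im})
    ((isOpen_lt continuous_const Complex.continuous_im).mem_nhds (by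
      show ε < k₀.im
      linarith))
    (Eventually.of_forall fun k => aesm_exp_mul hf k)
    (integrable_exp_mul hf hk₀'.le)
    ((Continuous.aestronglyMeasurable (by fun_prop)).mul (aesm_exp_mul hf k₀))
    ?_ (hf.norm.div_const ε) ?_
  · exact key.2.differentiableAt
  · filter_upwards [ae_restrict_mem measurableSet_Ioi] with y hy k hk
    have hy0 : 0 < y := hy
    have hk' : ε < k.im := hk
    rw [norm_mul, norm_mul, norm_mul, norm_I, one_mul, Complex.norm_real, Complex.norm_exp,
      Real.norm_of_nonneg hy0.le, ← mul_assoc, div_eq_inv_mul]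
    refine mul_le_mul_of_nonneg_right ?_ (norm_nonneg _)
    have h1 : (I * k * y).re = -(k.im * y) := by simp
    rw [h1, Real.exp_neg, ← div_eq_mul_inv, div_le_iff₀ (Real.exp_pos _), ← div_eq_inv_mul,
      le_div_iff₀ hε0]
    have := Real.add_one_le_exp (k.im * y)
    nlinarith
  · refine ae_of_all _ fun y k _ => ?_
    have h : HasDerivAt (fun k : ℂ => I * k * y) (I * y) k := by
      simpa using ((hasDerivAt_id k).const_mul I).mul_const (y : ℂ)
    exact (h.cexp.mul_const (f y)).congr_deriv (by ring)

/-- Integration by parts against `e^{iky}` gives the decay `F(k) = O(1/|k|)` in the closed upper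
half-plane; the bound is stated in the multiplied-out form, valid at `k = 0` too. -/
theorem norm_halfLineTransform_le {f f' : ℝ → ℂ}
    (hf' : ∀ x ∈ Ici (0:ℝ), HasDerivWithinAt f (f' x) (Ici 0) x)
    (hf_int : IntegrableOn f (Ioi 0)) (hf'_int : IntegrableOn f' (Ioi 0))
    (hf_lim : Tendsto f atTop (nhds 0)) {k : ℂ} (hk : 0 ≤ k.im) :
    ‖k‖ * ‖∫ y in Ioi (0:ℝ), Complex.exp (I * k * y) * f y‖ ≤
      ‖f 0‖ + ∫ y in Ioi (0:ℝ), ‖f' y‖ := by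
  have hexp : ∀ y : ℝ, HasDerivAt (fun y : ℝ => Complex.exp (I * k * y))
      (Complex.exp (I * k * y) * (I * k)) y := fun y => by
    have h : HasDerivAt (fun y : ℝ => I * k * (y : ℂ)) (I * k) y := by
      simpa using (Complex.ofRealCLM.hasDerivAt (x := y)).const_mul (I * k)
    exact h.cexp
  have h1 := integrable_exp_mul hf_int hk
  have h2 := integrable_exp_mul hf'_int hk
  have key := integral_Ioi_of_hasDerivAt_of_tendsto (a := 0) (m := 0)
    (f := fun y : ℝ => Complex.exp (I * k * y) * f y)
    (f' := fun y : ℝ => I * k * (Complex.exp (I * k * y) * f y) + Complex.exp (I * k * y) * f' y)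
    ?_ ?_ ((h1.const_mul _).add h2) ?_
  · rw [integral_add (h1.const_mul _) h2, integral_const_mul] at key
    have e : I * k * ∫ y in Ioi (0:ℝ), Complex.exp (I * k * y) * f y =
        -f 0 - ∫ y in Ioi (0:ℝ), Complex.exp (I * k * y) * f' y := by
      rw [eq_sub_iff_add_eq, key]
      simp
    have e2 := congrArg norm e
    rw [norm_mul, norm_mul, norm_I, one_mul] at e2
    rw [e2]
    refine (norm_sub_le _ _).trans ?_
    rw [norm_neg]
    gcongr
    refine norm_integral_le_of_norm_le hf'_int.norm ?_
    filter_upwards [ae_restrict_mem measurableSet_Ioi] with y hy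
    exact norm_exp_mul_le hk (le_of_lt hy)
  · exact (hexp 0).continuousAt.continuousWithinAt.mul
      (hf' 0 self_mem_Ici).continuousWithinAt
  · intro y hy
    have hfy : HasDerivAt f (f' y) y := (hf' y (le_of_lt (mem_Ioi.1 hy))).hasDerivAt (Ici_mem_nhds hy)
    exact ((hexp y).mul hfy).congr_deriv (by ring)
  · refine squeeze_zero_norm' ?_ (tendsto_zero_iff_norm_tendsto_zero.1 hf_lim)
    filter_upwards [eventually_ge_atTop 0] with y hy
    exact norm_exp_mul_le hk hy

/-! ### The series `S(k,t)` in closed form -/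

/-- The entire function `E(z) = ∑ (-1)^j z^j / (2j+1)!`, characterised by `E(z²) = sin z / z`. -/
noncomputable def sincSqrt (z : ℂ) : ℂ := ∑' j : ℕ, (-1 : ℂ) ^ j * z ^ j / ((2 * j + 1).factorial : ℂ)

theorem norm_sincSqrt_term_le (j : ℕ) {z : ℂ} {R : ℝ} (hz : ‖z‖ ≤ R) :
    ‖(-1 : ℂ) ^ j * z ^ j / ((2 * j + 1).factorial : ℂ)‖ ≤ R ^ j / (j.factorial : ℝ) := by
  rw [norm_div, norm_mul, norm_pow, norm_pow, norm_neg, norm_one, one_pow, one_mul,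
    Complex.norm_natCast]
  have h : (j.factorial : ℝ) ≤ ((2 * j + 1).factorial : ℝ) := by
    exact_mod_cast Nat.factorial_le (by omega)
  have h0 : (0:ℝ) < j.factorial := by exact_mod_cast j.factorial_pos
  gcongr
  exact (pow_nonneg (norm_nonneg z) j).trans (pow_le_pow_left₀ (norm_nonneg z) hz j)

theorem differentiable_sincSqrt : Differentiable ℂ sincSqrt := by
  intro z
  have h : DifferentiableOn ℂ sincSqrt (Metric.ball 0 (‖z‖ + 1)) :=
    differentiableOn_tsum_of_summable_norm (Real.summable_pow_div_factorial (‖z‖ + 1))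
      (fun j => Differentiable.differentiableOn (by fun_prop)) Metric.isOpen_ball
      (fun j w hw => norm_sincSqrt_term_le j (by
        rw [mem_ball_zero_iff] at hw
        exact hw.le))
  exact h.differentiableAt (Metric.isOpen_ball.mem_nhds (by simp))

theorem norm_sincSqrt_le {z : ℂ} {R : ℝ} (hz : ‖z‖ ≤ R) : ‖sincSqrt z‖ ≤ Real.exp R := by
  rw [Real.exp_eq_exp_ℝ, NormedSpace.exp_eq_tsum_div]
  exact tsum_of_norm_bounded (Real.summable_pow_div_factorial R).hasSum
    (fun j => norm_sincSqrt_term_le j hz)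

/-- Closed form of the series `S(k,t)`. With the convention `x / 0 = 0` it also holds at
`k = ±i`. -/
theorem series_eq (k : ℂ) (t : ℝ) : (∑' j : ℕ,
      (-1 : ℂ) ^ j * (t : ℂ) ^ (2 * j + 1) * k ^ (2 * j + 1) /
        (((2 * j + 1).factorial : ℂ) * (1 + k ^ 2) ^ (j + 1))) =
    t * k / (1 + k ^ 2) * sincSqrt (t ^ 2 * (k ^ 2 / (1 + k ^ 2))) := by
  rw [sincSqrt, ← tsum_mul_left]
  refine tsum_congr fun j => ?_
  simp only [div_eq_mul_inv, mul_inv, mul_pow, inv_pow, ← pow_mul, pow_succ]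
  ring

/-! ### Möbius maps of the disc to the upper half-plane -/

theorem one_add_sq_eq (k : ℂ) : 1 + k ^ 2 = (k - I) * (k + I) := by
  linear_combination I_sq

/-- A family of Möbius maps sending `0` to `i`, joining the similarity `w ↦ i + 2iw` (at `s = 0`)
to the Cayley map `w ↦ i(1+w)/(1-w)` of the unit disc onto the upper half-plane (at `s = 1`). -/
noncomputable def mob (s : ℝ) (w : ℂ) : ℂ := I + 2 * I * w / (1 - s * w)

theorem mob_im (s : ℝ) {w : ℂ} (h : 1 - s * w ≠ 0) :
    (mob s w).im * normSq (1 - s * w) = 1 + 2 * (1 - s) * w.re - s * (2 - s) * normSq w := by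
  have e : (mob s w).im = 1 + 2 * (w * (starRingEnd ℂ) (1 - s * w)).re / normSq (1 - s * w) := by
    rw [mob, div_eq_mul_inv, Complex.inv_def, Complex.add_im, I_im]
    simp only [Complex.mul_re, Complex.mul_im, Complex.ofReal_re, Complex.ofReal_im, I_re, I_im,
      Complex.re_ofNat, Complex.im_ofNat]
    ring
  have hn : normSq (1 - s * w) ≠ 0 := by simpa using h
  rw [e, add_mul, div_mul_cancel₀ _ hn]
  simp [normSq_apply]
  ring

theorem mob_ne_I {s : ℝ} {w : ℂ} (h : 1 - s * w ≠ 0) (hw : w ≠ 0) : mob s w ≠ I := by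
  rw [mob, Ne, add_eq_left]
  exact div_ne_zero (mul_ne_zero (mul_ne_zero two_ne_zero I_ne_zero) hw) h

theorem one_sub_ne_zero_of_norm_lt {s : ℝ} (h0 : 0 ≤ s) (h1 : s ≤ 1) {w : ℂ} (hw : ‖w‖ < 1) :
    1 - s * w ≠ 0 := by
  intro h
  have e := congrArg norm (sub_eq_zero.1 h)
  rw [norm_one, norm_mul, Complex.norm_real, Real.norm_of_nonneg h0] at e
  nlinarith [norm_nonneg w]

theorem mob_im_pos_of_norm_lt_half {s : ℝ} (h0 : 0 ≤ s) (h1 : s ≤ 1) {w : ℂ} (hw : ‖w‖ < 1 / 2) :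
    0 < (mob s w).im := by
  have hne := one_sub_ne_zero_of_norm_lt h0 h1 (hw.trans (by norm_num))
  have hpos : 0 < normSq (1 - s * w) := normSq_pos.2 hne
  refine pos_of_mul_pos_left ?_ hpos.le
  rw [mob_im s hne, normSq_eq_norm_sq]
  have hre := (abs_le.1 (Complex.abs_re_le_norm w)).1
  have hn := norm_nonneg w
  have hsq : ‖w‖ ^ 2 ≤ 1 / 4 := by nlinarith
  rcases h0.eq_or_lt with rfl | hs
  · nlinarith
  · nlinarith [mul_nonneg (sub_nonneg.2 h1) (sub_nonneg.2 hre),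
      mul_nonneg (sub_nonneg.2 h1) (sub_nonneg.2 hw.le),
      mul_nonneg (mul_nonneg h0 (by linarith : (0:ℝ) ≤ 2 - s)) (sub_nonneg.2 hsq)]

theorem mob_one_im {w : ℂ} (h : w ≠ 1) :
    (mob 1 w).im = (1 - normSq w) / normSq (1 - w) := by
  have h' : 1 - ((1:ℝ):ℂ) * w ≠ 0 := by
    rw [Complex.ofReal_one, one_mul]
    exact sub_ne_zero.2 h.symm
  have := mob_im 1 h'
  rw [eq_div_iff (by simpa using h')]
  simp only [Complex.ofReal_one, one_mul, sub_self, mul_zero, zero_mul, add_zero] at this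
  linarith

theorem mob_one_im_nonneg {w : ℂ} (h : w ≠ 1) (hw : ‖w‖ ≤ 1) : 0 ≤ (mob 1 w).im := by
  rw [mob_one_im h, normSq_eq_norm_sq]
  exact div_nonneg (by nlinarith [norm_nonneg w]) (normSq_nonneg _)

theorem mob_one_im_pos {w : ℂ} (hw : ‖w‖ < 1) : 0 < (mob 1 w).im := by
  have h : w ≠ 1 := by
    rintro rfl
    simp at hw
  rw [mob_one_im h, normSq_eq_norm_sq]
  exact div_pos (by nlinarith [norm_nonneg w]) (normSq_pos.2 (sub_ne_zero.2 h.symm))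

theorem hasDerivAt_mob_left (w : ℂ) {s : ℝ} (h : 1 - s * w ≠ 0) :
    HasDerivAt (fun s : ℝ => mob s w) (2 * I * w ^ 2 / (1 - s * w) ^ 2) s := by
  have h1 : HasDerivAt (fun s : ℝ => 1 - (s : ℂ) * w) (-w) s := by
    simpa using ((Complex.ofRealCLM.hasDerivAt (x := s)).mul_const w).const_sub 1
  exact (((hasDerivAt_const s (2 * I * w)).div h1 h).const_add I).congr_deriv (by ring)

theorem hasDerivAt_mob_right (s : ℝ) {w : ℂ} (h : 1 - s * w ≠ 0) :
    HasDerivAt (fun w : ℂ => mob s w) (2 * I / (1 - s * w) ^ 2) w := by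
  have h1 : HasDerivAt (fun w : ℂ => 1 - (s : ℂ) * w) (-s) w := by
    simpa using ((hasDerivAt_id w).const_mul (s : ℂ)).const_sub 1
  have h2 : HasDerivAt (fun w : ℂ => 2 * I * w) (2 * I) w := by
    simpa using (hasDerivAt_id w).const_mul (2 * I)
  exact ((h2.div h1 h).const_add I).congr_deriv (by ring)

/-! ### Deformation along the Möbius family -/

/-- The upper half-plane with the point `i` removed. -/
def puncturedUHP : Set ℂ := {k | 0 < k.im ∧ k ≠ I}

theorem isOpen_puncturedUHP : IsOpen puncturedUHP :=
  (isOpen_lt continuous_const Complex.continuous_im).inter isOpen_ne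

/-- The common value of `∂_s [g(φ_s(w)) φ_s'(w)]` and `∂_w [g(φ_s(w)) ∂_s φ_s(w)]` for the family
`φ_s = mob s`. -/
noncomputable def mobKernel (g : ℂ → ℂ) (s : ℝ) (w : ℂ) : ℂ :=
  deriv g (mob s w) * (2 * I * w ^ 2 / (1 - s * w) ^ 2) * (2 * I / (1 - s * w) ^ 2) +
    g (mob s w) * (4 * I * w / (1 - s * w) ^ 3)

theorem hasDerivAt_pullback_left {g : ℂ → ℂ} {s : ℝ} {w : ℂ} (h : 1 - s * w ≠ 0)
    (hg : DifferentiableAt ℂ g (mob s w)) :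
    HasDerivAt (fun s : ℝ => g (mob s w) * (2 * I / (1 - s * w) ^ 2)) (mobKernel g s w) s := by
  have h1 : HasDerivAt (fun s : ℝ => 1 - (s : ℂ) * w) (-w) s := by
    simpa using ((Complex.ofRealCLM.hasDerivAt (x := s)).mul_const w).const_sub 1
  have h2 : HasDerivAt (fun s : ℝ => g (mob s w))
      (deriv g (mob s w) * (2 * I * w ^ 2 / (1 - s * w) ^ 2)) s :=
    hg.hasDerivAt.comp_of_eq s (hasDerivAt_mob_left w h) rfl
  refine (h2.mul ((hasDerivAt_const s (2 * I)).div (h1.pow 2) (pow_ne_zero 2 h))).congr_deriv ?_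
  rw [mobKernel]
  have e : (0 * (1 - s * w) ^ 2 - 2 * I * ((2:ℕ) * (1 - s * w) ^ (2 - 1) * (-w))) /
      ((1 - s * w) ^ 2) ^ 2 = 4 * I * w / (1 - s * w) ^ 3 := by
    rw [div_eq_div_iff (pow_ne_zero _ (pow_ne_zero _ h)) (pow_ne_zero _ h)]
    push_cast
    ring
  simp only [Pi.pow_apply, Pi.div_apply]
  rw [e]

theorem hasDerivAt_pullback_right {g : ℂ → ℂ} {s : ℝ} {w : ℂ} (h : 1 - s * w ≠ 0)
    (hg : DifferentiableAt ℂ g (mob s w)) :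
    HasDerivAt (fun w : ℂ => g (mob s w) * (2 * I * w ^ 2 / (1 - s * w) ^ 2))
      (mobKernel g s w) w := by
  have h1 : HasDerivAt (fun w : ℂ => 1 - (s : ℂ) * w) (-s) w := by
    simpa using ((hasDerivAt_id w).const_mul (s : ℂ)).const_sub 1
  have h2 : HasDerivAt (fun w : ℂ => g (mob s w))
      (deriv g (mob s w) * (2 * I / (1 - s * w) ^ 2)) w :=
    hg.hasDerivAt.comp w (hasDerivAt_mob_right s h)
  have h3 : HasDerivAt (fun w : ℂ => 2 * I * w ^ 2) (2 * I * (2 * w)) w := by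
    simpa using ((hasDerivAt_id w).pow 2).const_mul (2 * I)
  refine (h2.mul (h3.div (h1.pow 2) (pow_ne_zero 2 h))).congr_deriv ?_
  rw [mobKernel]
  have e : (2 * I * (2 * w) * (1 - s * w) ^ 2 -
      2 * I * w ^ 2 * ((2:ℕ) * (1 - s * w) ^ (2 - 1) * (-s))) / ((1 - s * w) ^ 2) ^ 2 =
      4 * I * w / (1 - s * w) ^ 3 := by
    rw [div_eq_div_iff (pow_ne_zero _ (pow_ne_zero _ h)) (pow_ne_zero _ h)]
    push_cast
    ring
  simp only [Pi.pow_apply, Pi.div_apply]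
  rw [e]
  ring

theorem circleMap_zero_ne_zero {ρ : ℝ} (hρ : 0 < ρ) (θ : ℝ) : circleMap 0 ρ θ ≠ 0 :=
  circleMap_ne_center hρ.ne'

theorem norm_circleMap_zero' {ρ : ℝ} (hρ : 0 < ρ) (θ : ℝ) : ‖circleMap 0 ρ θ‖ = ρ := by
  rw [norm_circleMap_zero, abs_of_pos hρ]

/-- Deformation from a circle around `i` to its Apollonius counterpart. Moving `s` from `0` to `1`
does not change `∮ g(φ_s(w)) φ_s'(w) dw`, because the `s`-derivative of the integrand is a total
`w`-derivative. -/
theorem circleIntegral_mob_one_eq_mob_zero {g : ℂ → ℂ} (hg : DifferentiableOn ℂ g puncturedUHP)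
    {ρ : ℝ} (hρ : 0 < ρ) (hρ' : ρ < 1 / 2) :
    (∮ w in C(0, ρ), g (mob 1 w) * (2 * I / (1 - (1:ℝ) * w) ^ 2)) =
      ∮ w in C(0, ρ), g (mob 0 w) * (2 * I / (1 - (0:ℝ) * w) ^ 2) := by
  have hne : ∀ s ∈ Icc (0:ℝ) 1, ∀ w : ℂ, ‖w‖ = ρ → 1 - s * w ≠ 0 := fun s hs w hw =>
    one_sub_ne_zero_of_norm_lt hs.1 hs.2 (by linarith)
  have hmem : ∀ s ∈ Icc (0:ℝ) 1, ∀ w : ℂ, ‖w‖ = ρ → mob s w ∈ puncturedUHP := fun s hs w hw =>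
    ⟨mob_im_pos_of_norm_lt_half hs.1 hs.2 (by linarith),
      mob_ne_I (hne s hs w hw) (by
        rintro rfl
        simp at hw
        linarith)⟩
  have hgd : ∀ k ∈ puncturedUHP, DifferentiableAt ℂ g k := fun k hk =>
    hg.differentiableAt (isOpen_puncturedUHP.mem_nhds hk)
  have hcont : ContinuousOn (fun p : ℝ × ℝ => deriv (circleMap 0 ρ) p.2 *
      mobKernel g p.1 (circleMap 0 ρ p.2)) (Icc 0 1 ×ˢ univ) := by
    have hc : Continuous (fun p : ℝ × ℝ => circleMap 0 ρ p.2) :=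
      (continuous_circleMap 0 ρ).comp continuous_snd
    have hd : ContinuousOn (fun p : ℝ × ℝ => 1 - (p.1 : ℂ) * circleMap 0 ρ p.2)
        (Icc 0 1 ×ˢ univ) := Continuous.continuousOn (by fun_prop)
    have hd0 : ∀ p ∈ (Icc (0:ℝ) 1 ×ˢ (univ : Set ℝ)), 1 - (p.1 : ℂ) * circleMap 0 ρ p.2 ≠ 0 :=
      fun p hp => hne p.1 hp.1 _ (norm_circleMap_zero' hρ _)
    have hm : ContinuousOn (fun p : ℝ × ℝ => mob p.1 (circleMap 0 ρ p.2)) (Icc 0 1 ×ˢ univ) :=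
      continuousOn_const.add ((continuous_const.mul hc).continuousOn.div hd hd0)
    have hmt : MapsTo (fun p : ℝ × ℝ => mob p.1 (circleMap 0 ρ p.2)) (Icc 0 1 ×ˢ univ)
        puncturedUHP := fun p hp => hmem p.1 hp.1 _ (norm_circleMap_zero' hρ _)
    have hg' : ContinuousOn (deriv g) puncturedUHP := (hg.deriv isOpen_puncturedUHP).continuousOn
    refine ContinuousOn.mul ?_ (((((hg'.comp hm hmt).mul
      ((Continuous.continuousOn (by fun_prop)).div (hd.pow 2) fun p hp =>
        pow_ne_zero 2 (hd0 p hp))).mul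
      (continuousOn_const.div (hd.pow 2) fun p hp => pow_ne_zero 2 (hd0 p hp)))).add
      ((hg.continuousOn.comp hm hmt).mul
        ((Continuous.continuousOn (by fun_prop)).div (hd.pow 3) fun p hp =>
          pow_ne_zero 3 (hd0 p hp))))
    simp only [deriv_circleMap]
    exact (hc.mul continuous_const).continuousOn
  rw [← sub_eq_zero, circleIntegral, circleIntegral]
  have hslice : ∀ θ : ℝ, ContinuousOn (fun s : ℝ => deriv (circleMap 0 ρ) θ *
      mobKernel g s (circleMap 0 ρ θ)) (uIcc 0 1) := fun θ => by
    rw [uIcc_of_le zero_le_one]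
    exact hcont.comp (f := fun s : ℝ => (s, θ)) (Continuous.continuousOn (by fun_prop))
      fun s hs => ⟨hs, mem_univ _⟩
  -- The difference of the two integrands is `∫₀¹ ∂_s ds`; Fubini then lets `∮` act first.
  have hFTC : ∀ θ : ℝ, (∫ s in (0:ℝ)..1, deriv (circleMap 0 ρ) θ *
      mobKernel g s (circleMap 0 ρ θ)) =
      deriv (circleMap 0 ρ) θ •
        (g (mob 1 (circleMap 0 ρ θ)) * (2 * I / (1 - (1:ℝ) * circleMap 0 ρ θ) ^ 2)) -
      deriv (circleMap 0 ρ) θ •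
        (g (mob 0 (circleMap 0 ρ θ)) * (2 * I / (1 - (0:ℝ) * circleMap 0 ρ θ) ^ 2)) :=
    fun θ => by
      rw [intervalIntegral.integral_eq_sub_of_hasDerivAt (f := fun s : ℝ =>
        deriv (circleMap 0 ρ) θ *
          (g (mob s (circleMap 0 ρ θ)) * (2 * I / (1 - s * circleMap 0 ρ θ) ^ 2)))
        (fun s hs => ?_) (hslice θ).intervalIntegrable]
      · simp only [smul_eq_mul]
      · rw [uIcc_of_le zero_le_one] at hs
        have hw := norm_circleMap_zero' hρ θ
        exact (hasDerivAt_pullback_left (hne s hs _ hw) (hgd _ (hmem s hs _ hw))).const_mul _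
  have hci : ∀ s ∈ Icc (0:ℝ) 1, IntervalIntegrable (fun θ => deriv (circleMap 0 ρ) θ •
        (g (mob s (circleMap 0 ρ θ)) * (2 * I / (1 - (s:ℝ) * circleMap 0 ρ θ) ^ 2)))
        volume 0 (2 * Real.pi) := fun s hs => by
    have hc : Continuous (fun θ : ℝ => circleMap 0 ρ θ) := continuous_circleMap 0 ρ
    have hd : Continuous (fun θ : ℝ => 1 - (s : ℂ) * circleMap 0 ρ θ) := by fun_prop
    have hd0 : ∀ θ : ℝ, 1 - (s : ℂ) * circleMap 0 ρ θ ≠ 0 :=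
      fun θ => hne s hs _ (norm_circleMap_zero' hρ _)
    have hm : Continuous (fun θ : ℝ => mob s (circleMap 0 ρ θ)) :=
      continuous_const.add ((continuous_const.mul hc).div hd hd0)
    have hgm : Continuous (fun θ : ℝ => g (mob s (circleMap 0 ρ θ))) :=
      hg.continuousOn.comp_continuous hm fun θ => hmem s hs _ (norm_circleMap_zero' hρ _)
    refine Continuous.intervalIntegrable ?_ _ _
    simp only [deriv_circleMap]
    exact (hc.mul continuous_const).smul
      (hgm.mul (continuous_const.div (hd.pow 2) fun θ => pow_ne_zero 2 (hd0 θ)))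
  rw [← intervalIntegral.integral_sub (hci 1 (by simp)) (hci 0 (by simp))]
  simp_rw [← hFTC]
  rw [intervalIntegral_intervalIntegral_swap]
  · refine (intervalIntegral.integral_congr (g := fun _ => (0:ℂ)) fun s hs => ?_).trans (by simp)
    rw [uIcc_of_le zero_le_one] at hs
    exact circleIntegral.integral_eq_zero_of_hasDerivWithinAt
      (f := fun w : ℂ => g (mob s w) * (2 * I * w ^ 2 / (1 - s * w) ^ 2)) hρ.le fun w hw => by
        have hw' : ‖w‖ = ρ := by simpa using hw
        exact (hasDerivAt_pullback_right (hne s hs w hw')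
          (hgd _ (hmem s hs w hw'))).hasDerivWithinAt
  · have hK : IsCompact (Icc (0:ℝ) (2 * Real.pi) ×ˢ Icc (0:ℝ) 1) := isCompact_Icc.prod isCompact_Icc
    refine IntegrableOn.mono_set (ContinuousOn.integrableOn_compact hK ?_) ?_ (t := _)
    · exact hcont.comp (f := fun p : ℝ × ℝ => (p.2, p.1)) (Continuous.continuousOn (by fun_prop))
        fun p hp => ⟨hp.2, mem_univ _⟩
    · rw [uIoc_of_le zero_le_one, uIoc_of_le (by positivity)]
      exact prod_mono Ioc_subset_Icc_self Ioc_subset_Icc_self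

/-- At `s = 0` the pulled-back integral is the integral over `C(i, r)`, the parametrization being
rotated by a quarter turn. -/
theorem circleIntegral_mob_zero (g : ℂ → ℂ) (r : ℝ) :
    (∮ w in C(0, r / 2), g (mob 0 w) * (2 * I / (1 - (0:ℝ) * w) ^ 2)) = ∮ k in C(I, r), g k := by
  have hrot : ∀ θ : ℝ, circleMap 0 r (θ + Real.pi / 2) = 2 * I * circleMap 0 (r / 2) θ := by
    intro θ
    simp only [circleMap, zero_add]
    push_cast
    rw [add_mul, Complex.exp_add, Complex.exp_pi_div_two_mul_I]
    ring
  have hper : Function.Periodic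
      (fun θ : ℝ => deriv (circleMap I r) θ • g (circleMap I r θ)) (2 * Real.pi) := by
    intro θ
    simp only [deriv_circleMap]
    rw [periodic_circleMap I r θ, periodic_circleMap 0 r θ]
  rw [circleIntegral, circleIntegral]
  have h1 := hper.intervalIntegral_add_eq 0 (Real.pi / 2)
  rw [zero_add] at h1
  have h2 := intervalIntegral.integral_comp_add_right (a := 0) (b := 2 * Real.pi)
    (fun θ : ℝ => deriv (circleMap I r) θ • g (circleMap I r θ)) (Real.pi / 2)
  rw [zero_add, add_comm (2 * Real.pi)] at h2
  rw [h1, ← h2]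
  refine intervalIntegral.integral_congr fun θ _ => ?_
  have e : circleMap I r (θ + Real.pi / 2) = mob 0 (circleMap 0 (r / 2) θ) := by
    have := hrot θ
    simp only [circleMap, zero_add, mob] at this ⊢
    rw [this]
    simp
  simp only [deriv_circleMap, smul_eq_mul, e, hrot]
  simp
  ring

/-! ### From a small circle to the real line -/

/-- The integrand `g(φ(w)) φ'(w)`, where `φ(w) = i(1+w)/(1-w)` is the Cayley map `mob 1`. -/
noncomputable def cayleyPullback (g : ℂ → ℂ) (w : ℂ) : ℂ :=
  g (mob 1 w) * (2 * I / (1 - (1:ℝ) * w) ^ 2)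

theorem mob_one_add_I {w : ℂ} (h : w ≠ 1) : mob 1 w + I = 2 * I / (1 - w) := by
  have h' : 1 - w ≠ 0 := sub_ne_zero.2 h.symm
  rw [mob, Complex.ofReal_one, one_mul, eq_div_iff h', add_mul, add_mul, div_mul_cancel₀ _ h']
  ring

theorem mob_one_sub_I (w : ℂ) : mob 1 w - I = 2 * I * w / (1 - w) := by
  rw [mob, Complex.ofReal_one, one_mul]
  ring

theorem cayley_den_ne_zero {w : ℂ} (h : w ≠ 1) : 1 - ((1:ℝ):ℂ) * w ≠ 0 := by
  rw [Complex.ofReal_one, one_mul]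
  exact sub_ne_zero.2 h.symm

theorem continuousOn_cayleyPullback {g : ℂ → ℂ} (hg : ContinuousOn g {k | 0 ≤ k.im ∧ k ≠ I}) :
    ContinuousOn (cayleyPullback g) {w | ‖w‖ ≤ 1 ∧ w ≠ 1 ∧ w ≠ 0} := by
  have hd : ContinuousOn (fun w : ℂ => 1 - ((1:ℝ):ℂ) * w) {w | ‖w‖ ≤ 1 ∧ w ≠ 1 ∧ w ≠ 0} :=
    Continuous.continuousOn (by fun_prop)
  have hm : ContinuousOn (mob 1) {w | ‖w‖ ≤ 1 ∧ w ≠ 1 ∧ w ≠ 0} := fun w hw =>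
    (hasDerivAt_mob_right 1 (cayley_den_ne_zero hw.2.1)).continuousAt.continuousWithinAt
  exact (hg.comp hm fun w hw => ⟨mob_one_im_nonneg hw.2.1 hw.1,
    mob_ne_I (cayley_den_ne_zero hw.2.1) hw.2.2⟩).mul
    (continuousOn_const.div (hd.pow 2) fun w hw => pow_ne_zero 2 (cayley_den_ne_zero hw.2.1))

theorem differentiableAt_cayleyPullback {g : ℂ → ℂ} (hg : DifferentiableOn ℂ g puncturedUHP)
    {w : ℂ} (hw : ‖w‖ < 1) (hw0 : w ≠ 0) : DifferentiableAt ℂ (cayleyPullback g) w := by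
  have h1 : w ≠ 1 := by
    rintro rfl
    simp at hw
  have hd := cayley_den_ne_zero h1
  have hmem : mob 1 w ∈ puncturedUHP := ⟨mob_one_im_pos hw, mob_ne_I hd hw0⟩
  refine ((hg.differentiableAt (isOpen_puncturedUHP.mem_nhds hmem)).comp w
    (hasDerivAt_mob_right 1 hd).differentiableAt).mul ?_
  exact (differentiableAt_const _).div (by fun_prop) (pow_ne_zero 2 hd)

/-- Decay `g(k) = O(1/|k+i|²)` of the integrand is boundedness of its Cayley pullback. -/
theorem norm_cayleyPullback_le {g : ℂ → ℂ} {ρ M : ℝ}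
    (hb : ∀ k : ℂ, 0 ≤ k.im → ρ * ‖k + I‖ ≤ ‖k - I‖ → ‖g k‖ * ‖k + I‖ ^ 2 ≤ M)
    {w : ℂ} (hw : ‖w‖ ≤ 1) (hw1 : w ≠ 1) (hρ : ρ ≤ ‖w‖) : ‖cayleyPullback g w‖ ≤ M / 2 := by
  have hd : 0 < ‖1 - w‖ := norm_pos_iff.2 (sub_ne_zero.2 hw1.symm)
  have h := hb (mob 1 w) (mob_one_im_nonneg hw1 hw) (by
    rw [mob_one_add_I hw1, mob_one_sub_I, norm_div, norm_div, norm_mul _ w, ← mul_div_assoc,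
      mul_comm ρ]
    gcongr)
  rw [mob_one_add_I hw1, norm_div, norm_mul, norm_I, Complex.norm_ofNat] at h
  rw [cayleyPullback, Complex.ofReal_one, one_mul, norm_mul, norm_div, norm_mul, norm_I,
    Complex.norm_ofNat, norm_pow, le_div_iff₀ two_pos]
  calc _ = ‖g (mob 1 w)‖ * (2 * 1 / ‖1 - w‖) ^ 2 := by ring
    _ ≤ M := h

theorem circleMap_zero_one_ne_one {θ : ℝ} (h0 : 0 < θ) (h1 : θ < 2 * Real.pi) :
    circleMap 0 1 θ ≠ 1 := by
  intro h
  rw [circleMap, zero_add, Complex.ofReal_one, one_mul, Complex.exp_eq_one_iff] at h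
  obtain ⟨n, hn⟩ := h
  have e : θ = n * (2 * Real.pi) := by
    have := congrArg Complex.im hn
    simpa using this
  have hpi := Real.two_pi_pos
  have hn0 : (0:ℝ) < n := by
    by_contra! hc
    nlinarith
  have hn1 : (n:ℝ) < 1 := by
    by_contra! hc
    nlinarith
  have a : 0 < n := by exact_mod_cast hn0
  have b : n < 1 := by exact_mod_cast hn1
  omega

/-- The circles `|w| = ρ` may be pushed out to the unit circle: the integral does not depend on
`ρ < 1` by Cauchy's theorem on annuli, and the boundedness of the pullback lets `ρ → 1` despite
the singularity at `w = 1`. -/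
theorem circleIntegral_cayleyPullback_eq {g : ℂ → ℂ} (hgd : DifferentiableOn ℂ g puncturedUHP)
    (hgc : ContinuousOn g {k | 0 ≤ k.im ∧ k ≠ I}) {ρ M : ℝ} (hρ : 0 < ρ) (hρ1 : ρ < 1)
    (hb : ∀ k : ℂ, 0 ≤ k.im → ρ * ‖k + I‖ ≤ ‖k - I‖ → ‖g k‖ * ‖k + I‖ ^ 2 ≤ M) :
    (∮ w in C(0, 1), cayleyPullback g w) = ∮ w in C(0, ρ), cayleyPullback g w := by
  have hGc := continuousOn_cayleyPullback hgc
  have hin : ∀ w : ℂ, ‖w‖ < 1 → w ≠ 0 → w ∈ {w : ℂ | ‖w‖ ≤ 1 ∧ w ≠ 1 ∧ w ≠ 0} :=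
    fun w hw hw0 => ⟨hw.le, by
      rintro rfl
      simp at hw, hw0⟩
  have hev : ∀ᶠ R : ℝ in nhdsWithin 1 (Iio 1), R ∈ Ioo ρ 1 := Ioo_mem_nhdsLT hρ1
  have hconst : ∀ᶠ R : ℝ in nhdsWithin 1 (Iio 1),
      (∮ w in C(0, R), cayleyPullback g w) = ∮ w in C(0, ρ), cayleyPullback g w := by
    filter_upwards [hev] with R hR
    refine circleIntegral_eq_of_differentiable_on_annulus_off_countable hρ hR.1.le
      countable_empty (hGc.mono ?_) ?_
    · intro w hw
      have h1 : ‖w‖ ≤ R := by simpa using hw.1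
      have h2 : ρ ≤ ‖w‖ := by simpa using hw.2
      exact hin w (h1.trans_lt hR.2) (norm_pos_iff.1 (hρ.trans_le h2))
    · intro w hw
      have h1 : ‖w‖ < R := by simpa using hw.1.1
      have h2 : ρ < ‖w‖ := by simpa using hw.1.2
      exact differentiableAt_cayleyPullback hgd (h1.trans hR.2) (norm_pos_iff.1 (hρ.trans h2))
  refine tendsto_nhds_unique (f := fun R : ℝ => ∮ w in C(0, R), cayleyPullback g w)
    (l := nhdsWithin 1 (Iio 1)) ?_ (tendsto_const_nhds.congr' (hconst.mono fun _ h => h.symm))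
  simp only [circleIntegral]
  refine intervalIntegral.tendsto_integral_filter_of_dominated_convergence (fun _ => M / 2)
    ?_ ?_ intervalIntegrable_const ?_
  · filter_upwards [hev] with R hR
    have hR0 : 0 < R := hρ.trans hR.1
    have hd : Continuous (fun θ : ℝ => deriv (circleMap 0 R) θ) := by
      simp only [deriv_circleMap]
      exact (continuous_circleMap 0 R).mul continuous_const
    have hG : Continuous (fun θ : ℝ => cayleyPullback g (circleMap 0 R θ)) :=
      hGc.comp_continuous (continuous_circleMap 0 R) fun θ => hin _ (by
        rw [norm_circleMap_zero' hR0]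
        exact hR.2) (circleMap_zero_ne_zero hR0 θ)
    exact (hd.smul hG).aestronglyMeasurable
  · filter_upwards [hev] with R hR
    have hR0 : 0 < R := hρ.trans hR.1
    refine ae_of_all _ fun θ _ => ?_
    have hn := norm_circleMap_zero' hR0 θ
    have hG := norm_cayleyPullback_le hb (w := circleMap 0 R θ) (by linarith [hR.2])
      (hin _ (by linarith [hR.2]) (circleMap_zero_ne_zero hR0 θ)).2.1 (by linarith [hR.1])
    rw [norm_smul, deriv_circleMap, norm_mul, norm_I, hn, mul_one]
    exact (mul_le_of_le_one_left (norm_nonneg _) hR.2.le).trans hG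
  -- Pointwise convergence can fail only at `θ = 2π`, where the circle passes through `w = 1`.
  · filter_upwards [Measure.ae_ne volume (2 * Real.pi)] with θ hθ hθI
    rw [uIoc_of_le Real.two_pi_pos.le] at hθI
    have hne := circleMap_zero_one_ne_one hθI.1 (lt_of_le_of_ne hθI.2 hθ)
    have hc : Continuous (fun R : ℝ => circleMap 0 R θ) := by
      unfold circleMap
      fun_prop
    have hcw : Tendsto (fun R : ℝ => circleMap 0 R θ) (nhdsWithin 1 (Iio 1))
        (nhdsWithin (circleMap 0 1 θ) {w | ‖w‖ ≤ 1 ∧ w ≠ 1 ∧ w ≠ 0}) := by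
      refine tendsto_nhdsWithin_iff.2 ⟨hc.continuousAt.continuousWithinAt, ?_⟩
      filter_upwards [hev] with R hR
      have hR0 : 0 < R := hρ.trans hR.1
      refine hin _ ?_ (circleMap_zero_ne_zero hR0 θ)
      rw [norm_circleMap_zero' hR0]
      exact hR.2
    refine Tendsto.smul ?_ ((hGc (circleMap 0 1 θ) ⟨by simp, hne,
      circleMap_zero_ne_zero one_pos θ⟩).tendsto.comp hcw)
    simp only [deriv_circleMap]
    exact (hc.mul continuous_const).continuousAt.continuousWithinAt

/-- The point of the unit circle at angle `π + 2 arctan k` is the inverse Cayley image of `k`. -/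
theorem circleMap_pi_add_two_arctan (k : ℝ) :
    circleMap 0 1 (Real.pi + 2 * Real.arctan k) = (k - I) / (k + I) := by
  have hkI : (k : ℂ) + I ≠ 0 := fun h => by simpa using congrArg Complex.im h
  have hpos : 0 < 1 + k ^ 2 := by positivity
  have hs : ((√(1 + k ^ 2) : ℝ) : ℂ) ^ 2 = 1 + k ^ 2 := by
    rw [← Complex.ofReal_pow, Real.sq_sqrt hpos.le]
    push_cast
    ring
  have hs0 : ((√(1 + k ^ 2) : ℝ) : ℂ) ≠ 0 := by
    exact_mod_cast (Real.sqrt_pos.2 hpos).ne'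
  have e : Complex.exp (Real.arctan k * I) = (1 + k * I) / (√(1 + k ^ 2) : ℝ) := by
    rw [Complex.exp_mul_I, ← Complex.ofReal_cos, ← Complex.ofReal_sin, Real.cos_arctan,
      Real.sin_arctan]
    push_cast
    ring
  have e2 : ((Real.pi + 2 * Real.arctan k : ℝ) : ℂ) * I =
      Real.pi * I + ((Real.arctan k * I) + (Real.arctan k * I)) := by
    push_cast
    ring
  rw [circleMap, e2, Complex.exp_add, Complex.exp_pi_mul_I, Complex.exp_add, e, zero_add,
    Complex.ofReal_one, one_mul, div_mul_div_comm, ← sq, ← sq, hs, eq_div_iff hkI]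
  have hkI' : (k : ℂ) - I ≠ 0 := fun h => by simpa using congrArg Complex.im h
  rw [one_add_sq_eq]
  field_simp
  linear_combination (-(k:ℂ) ^ 2 - 1) * I_sq

/-- The Cayley map turns the integral over the unit circle into the integral over the real line. -/
theorem circleIntegral_cayleyPullback_one (g : ℂ → ℂ) :
    (∮ w in C(0, 1), cayleyPullback g w) = ∫ k : ℝ, g k := by
  have himg : (fun k : ℝ => Real.pi + 2 * Real.arctan k) '' univ = Ioo 0 (2 * Real.pi) := by
    ext θ
    constructor
    · rintro ⟨k, -, rfl⟩
      have h1 := Real.neg_pi_div_two_lt_arctan k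
      have h2 := Real.arctan_lt_pi_div_two k
      constructor <;> dsimp only <;> linarith
    · intro hθ
      refine ⟨Real.tan ((θ - Real.pi) / 2), mem_univ _, ?_⟩
      dsimp only
      rw [Real.arctan_tan (by linarith [hθ.1]) (by linarith [hθ.2])]
      ring
  -- `θ = π + 2 arctan k` is an increasing bijection from `ℝ` onto `(0, 2π)`.
  have key := integral_image_eq_integral_abs_deriv_smul (s := univ)
    (f := fun k : ℝ => Real.pi + 2 * Real.arctan k) (f' := fun k => 2 * (1 / (1 + k ^ 2)))
    MeasurableSet.univ
    (fun k _ => (((Real.hasDerivAt_arctan k).const_mul 2).const_add Real.pi).hasDerivWithinAt)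
    (fun a _ b _ hab => Real.arctan_injective (by
      dsimp only at hab
      linarith))
    (fun θ => deriv (circleMap 0 1) θ • cayleyPullback g (circleMap 0 1 θ))
  rw [himg] at key
  rw [circleIntegral, intervalIntegral.integral_of_le Real.two_pi_pos.le,
    integral_Ioc_eq_integral_Ioo, key, setIntegral_univ]
  refine integral_congr_ae (ae_of_all _ fun k => ?_)
  have hkI : (k : ℂ) + I ≠ 0 := fun h => by simpa using congrArg Complex.im h
  have hkI' : (k : ℂ) - I ≠ 0 := fun h => by simpa using congrArg Complex.im h
  have hw1 : 1 - ((k : ℂ) - I) / (k + I) = 2 * I / (k + I) := by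
    rw [eq_div_iff hkI, sub_mul, div_mul_cancel₀ _ hkI]
    ring
  have hm : mob 1 (((k : ℂ) - I) / (k + I)) = k := by
    rw [mob, Complex.ofReal_one, one_mul, hw1]
    field_simp
    ring
  dsimp only
  rw [abs_of_pos (by positivity), deriv_circleMap, circleMap_pi_add_two_arctan, cayleyPullback,
    hm, Complex.ofReal_one, one_mul, hw1, Complex.real_smul, smul_eq_mul]
  push_cast
  rw [one_add_sq_eq]
  field_simp

/-- A function holomorphic on the punctured upper half-plane, continuous up to the real line, and
`O(1/|k|²)` away from `i`, has the same integral over the real line and over `C(i, r)`. -/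
theorem circleIntegral_eq_integral_real {g : ℂ → ℂ} (hgd : DifferentiableOn ℂ g puncturedUHP)
    (hgc : ContinuousOn g {k | 0 ≤ k.im ∧ k ≠ I}) {r M : ℝ} (hr0 : 0 < r) (hr1 : r < 1)
    (hb : ∀ k : ℂ, 0 ≤ k.im → r / 2 * ‖k + I‖ ≤ ‖k - I‖ → ‖g k‖ * ‖k + I‖ ^ 2 ≤ M) :
    Integrable (fun k : ℝ => g k) ∧ (∮ k in C(I, r), g k) = ∫ k : ℝ, g k := by
  constructor
  · have hc : Continuous (fun k : ℝ => g k) :=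
      hgc.comp_continuous Complex.continuous_ofReal fun k =>
        ⟨by simp, fun h => by simpa using congrArg Complex.im h⟩
    refine Integrable.mono' (integrable_inv_one_add_sq.const_mul M) hc.aestronglyMeasurable
      (ae_of_all _ fun k => ?_)
    have h1 : ‖(k : ℂ) + I‖ ^ 2 = 1 + k ^ 2 := by
      rw [← normSq_eq_norm_sq, normSq_apply]
      simp
      ring
    -- A real point is equidistant from `i` and `-i`, so the decay hypothesis applies to it.
    have h2 : ‖(k : ℂ) - I‖ = ‖(k : ℂ) + I‖ := by
      rw [← Complex.norm_conj]
      simp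
    have h := hb k (by simp) (by
      rw [h2]
      exact mul_le_of_le_one_left (norm_nonneg _) (by linarith))
    rw [h1] at h
    rw [← div_eq_mul_inv, le_div_iff₀ (by positivity)]
    exact h
  · rw [← circleIntegral_mob_zero, ← circleIntegral_mob_one_eq_mob_zero hgd (half_pos hr0)
      (by linarith), ← circleIntegral_cayleyPullback_one]
    exact (circleIntegral_cayleyPullback_eq hgd hgc (half_pos hr0) (by linarith) hb).symm

/-! ### The integrand `S(k,t) F(k)` -/

theorem norm_le_norm_add_I {k : ℂ} (hk : 0 ≤ k.im) : ‖k‖ ≤ ‖k + I‖ := by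
  refine abs_le_of_sq_le_sq' ?_ (norm_nonneg _) |>.2
  rw [← normSq_eq_norm_sq, ← normSq_eq_norm_sq, normSq_apply, normSq_apply]
  simp
  nlinarith

theorem add_I_ne_zero {k : ℂ} (hk : 0 ≤ k.im) : k + I ≠ 0 := fun h => by
  have := congrArg Complex.im h
  simp at this
  linarith

/-- Away from `i` in the closed upper half-plane, `k² / (1+k²)` is bounded and so is the entire
factor of `S(k,t)`; the remaining factor `k / (1+k²)` and the decay of `F` give `O(1/|k+i|²)`. -/
theorem norm_series_mul_le {F : ℂ → ℂ} {C : ℝ} (hF : ∀ k : ℂ, 0 ≤ k.im → ‖k‖ * ‖F k‖ ≤ C)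
    (t : ℝ) {ρ : ℝ} (hρ : 0 < ρ) {k : ℂ} (hk : 0 ≤ k.im) (hkρ : ρ * ‖k + I‖ ≤ ‖k - I‖) :
    ‖t * k / (1 + k ^ 2) * sincSqrt (t ^ 2 * (k ^ 2 / (1 + k ^ 2))) * F k‖ * ‖k + I‖ ^ 2 ≤
      |t| * Real.exp (t ^ 2 * (1 / ρ)) * C * (1 / ρ) := by
  have ha : 0 < ‖k + I‖ := norm_pos_iff.2 (add_I_ne_zero hk)
  have hb : 0 < ‖k - I‖ := lt_of_lt_of_le (by positivity) hkρ
  have hab : ‖k + I‖ / ‖k - I‖ ≤ 1 / ρ := by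
    rw [div_le_div_iff₀ hb hρ]
    linarith
  have hka := norm_le_norm_add_I hk
  have hC : 0 ≤ C := le_trans (by positivity) (hF k hk)
  have hE : ‖sincSqrt (t ^ 2 * (k ^ 2 / (1 + k ^ 2)))‖ ≤ Real.exp (t ^ 2 * (1 / ρ)) := by
    refine norm_sincSqrt_le ?_
    rw [norm_mul, norm_pow, Complex.norm_real, Real.norm_eq_abs, sq_abs]
    refine mul_le_mul_of_nonneg_left ?_ (sq_nonneg t)
    rw [one_add_sq_eq, norm_div, norm_mul, norm_pow]
    refine le_trans ?_ hab
    rw [div_le_div_iff₀ (by positivity) hb]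
    have : ‖k‖ ^ 2 ≤ ‖k + I‖ ^ 2 := by gcongr
    nlinarith
  rw [one_add_sq_eq] at hE ⊢
  rw [norm_mul, norm_mul, norm_div, norm_mul, norm_mul, Complex.norm_real, Real.norm_eq_abs]
  calc |t| * ‖k‖ / (‖k - I‖ * ‖k + I‖) *
        ‖sincSqrt (t ^ 2 * (k ^ 2 / ((k - I) * (k + I))))‖ * ‖F k‖ * ‖k + I‖ ^ 2
      = |t| * ‖sincSqrt (t ^ 2 * (k ^ 2 / ((k - I) * (k + I))))‖ * (‖k‖ * ‖F k‖) *
        (‖k + I‖ / ‖k - I‖) := by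
        field_simp
    _ ≤ |t| * Real.exp (t ^ 2 * (1 / ρ)) * C * (1 / ρ) := by
        gcongr
        exact hF k hk

/-- Contour deformation from the circle `C(i,r)` to the real line for
`S(k,t) F(k)`, where `F` is the half-line transform of a decaying `C¹` integrable
function `f` and `S(k,t)` is the single-valued realization of `sin(ω(k)t)/μ(k)`. -/
theorem stmt17 (f f' : ℝ → ℂ)
    (hf' : ∀ x ∈ Ici (0:ℝ), HasDerivWithinAt f (f' x) (Ici 0) x)
    (hf'c : ContinuousOn f' (Ici 0))
    (hf_int : IntegrableOn f (Ioi 0)) (hf'_int : IntegrableOn f' (Ioi 0))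
    (hf_lim : Tendsto f atTop (nhds 0))
    (F : ℂ → ℂ) (hF : ∀ k : ℂ, F k = ∫ y in Ioi (0:ℝ), Complex.exp (Complex.I * k * y) * f y)
    (S : ℂ → ℝ → ℂ)
    (hS : ∀ (k : ℂ) (t : ℝ), S k t = ∑' j : ℕ,
      (-1 : ℂ) ^ j * (t : ℂ) ^ (2 * j + 1) * k ^ (2 * j + 1) /
        (((2 * j + 1).factorial : ℂ) * (1 + k ^ 2) ^ (j + 1)))
    (t : ℝ) (r : ℝ) (hr0 : 0 < r) (hr1 : r < 1) :
    Integrable (fun k : ℝ => S (k : ℂ) t * F (k : ℂ)) ∧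
    (∮ k in C(Complex.I, r), S k t * F k) = ∫ k : ℝ, S (k : ℂ) t * F (k : ℂ) := by
  have hFeq : F = fun k : ℂ => ∫ y in Ioi (0:ℝ), Complex.exp (Complex.I * k * y) * f y :=
    funext hF
  have hSeq : ∀ k : ℂ, S k t =
      t * k / (1 + k ^ 2) * sincSqrt (t ^ 2 * (k ^ 2 / (1 + k ^ 2))) := fun k => by
    rw [hS, series_eq]
  have hden : ∀ k : ℂ, 0 ≤ k.im → k ≠ I → 1 + k ^ 2 ≠ 0 := fun k hk hkI => by
    rw [one_add_sq_eq]
    exact mul_ne_zero (sub_ne_zero.2 hkI) (add_I_ne_zero hk)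
  have hSd : ∀ k : ℂ, 0 ≤ k.im → k ≠ I →
      DifferentiableAt ℂ (fun k : ℂ => S k t) k := fun k hk hkI => by
    simp only [hSeq]
    have hd : DifferentiableAt ℂ (fun k : ℂ => 1 + k ^ 2) k := by fun_prop
    refine DifferentiableAt.mul (DifferentiableAt.div (by fun_prop) hd (hden k hk hkI)) ?_
    refine (differentiable_sincSqrt _).comp k (DifferentiableAt.const_mul ?_ _)
    exact DifferentiableAt.div (by fun_prop) hd (hden k hk hkI)
  refine circleIntegral_eq_integral_real (g := fun k => S k t * F k) ?_ ?_ hr0 hr1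
    (M := |t| * Real.exp (t ^ 2 * (1 / (r / 2))) * (‖f 0‖ + ∫ y in Ioi (0:ℝ), ‖f' y‖) *
      (1 / (r / 2))) ?_
  · refine DifferentiableOn.mul
      (fun k hk => (hSd k (le_of_lt hk.1) hk.2).differentiableWithinAt) ?_
    rw [hFeq]
    exact (differentiableOn_halfLineTransform hf_int).mono fun k hk => hk.1
  · refine ContinuousOn.mul
      (fun k hk => (hSd k hk.1 hk.2).continuousAt.continuousWithinAt) ?_
    rw [hFeq]
    exact (continuousOn_halfLineTransform hf_int).mono fun k hk => hk.1
  · intro k hk hkr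
    rw [hSeq]
    refine norm_series_mul_le (fun k hk => ?_) t (half_pos hr0) hk hkr
    rw [hF]
    exact norm_halfLineTransform_le hf' hf_int hf'_int hf_lim hk
end
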